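/- Let W be a group with finite generating set S, and (V_1, ρ_1), (V_2, ρ_2) irreducible reflection representations of (W, S) over a field of characteristic 0 with reflection vectors α_i in V_1 and β_i in V_2. Suppose Λ^d V_1 ≅ Λ^d V_2 as W-modules with 2 ≤ d ≤ dim V_1 - 1 = dim V_2 - 1. If α_{j_1}, ..., α_{j_{d+1}} are linearly independent in V_1, then β_{j_1}, ..., β_{j_{d+1}} are linearly independent in V_2. -/

import Mathlib

open ExteriorAlgebra Module

section Preamble

/-- A linear endomorphism is diagonalizable if its eigenspaces span the whole space. -/
def IsDiagonalizable {F V : Type*} [Field F] [AddCommGroup V] [Module F V]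
    (s : Module.End F V) : Prop :=
  (⨆ μ : F, Module.End.eigenspace s μ) = ⊤

/-- A generalized reflection: a diagonalizable endomorphism with `rank (s - id) = 1`. -/
def IsGenReflection {F V : Type*} [Field F] [AddCommGroup V] [Module F V]
    (s : Module.End F V) : Prop :=
  IsDiagonalizable s ∧ Module.finrank F (LinearMap.range (s - 1)) = 1

/-- A reflection vector of `s`: a nonzero vector in the image of `s - id`. -/
def IsReflVector {F V : Type*} [Field F] [AddCommGroup V] [Module F V]
    (s : Module.End F V) (a : V) : Prop :=
  a ≠ 0 ∧ a ∈ LinearMap.range (s - 1)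

lemma map_mem_exteriorPower {R M N : Type*} [CommRing R] [AddCommGroup M] [Module R M]
    [AddCommGroup N] [Module R N] (d : ℕ) (f : M →ₗ[R] N) {x : ExteriorAlgebra R M}
    (hx : x ∈ ⋀[R]^d M) : ExteriorAlgebra.map f x ∈ ⋀[R]^d N := by
  rw [← ιMulti_span_fixedDegree] at hx ⊢
  induction hx using Submodule.span_induction with
  | mem x hx =>
      obtain ⟨m, rfl⟩ := hx
      rw [map_apply_ιMulti]
      exact Submodule.subset_span ⟨_, rfl⟩
  | zero => simp
  | add x y _ _ hx hy => rw [map_add]; exact Submodule.add_mem _ hx hy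
  | smul c x _ hx => rw [map_smul]; exact Submodule.smul_mem _ _ hx

/-- The linear map induced on `d`-th exterior powers by a linear map. -/
def extMap {R M N : Type*} [CommRing R] [AddCommGroup M] [Module R M]
    [AddCommGroup N] [Module R N] (d : ℕ) (f : M →ₗ[R] N) :
    ⋀[R]^d M →ₗ[R] ⋀[R]^d N :=
  ((ExteriorAlgebra.map f).toLinearMap.domRestrict (⋀[R]^d M)).codRestrict (⋀[R]^d N)
    (fun x => map_mem_exteriorPower d f x.2)

/-- The wedge `v 0 ∧ ⋯ ∧ v (d-1)` as an element of the `d`-th exterior power. -/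
def wedge {R M : Type*} [CommRing R] [AddCommGroup M] [Module R M] (d : ℕ)
    (v : Fin d → M) : ⋀[R]^d M :=
  ⟨ιMulti R d v, ιMulti_range R d (Set.mem_range_self v)⟩

end Preamble

/-! Let `t` be a reflection with reflection vector `a`. In the exterior algebra, `a ∧ x = 0` holds
exactly when `t` scales `x` by some factor `μ ≠ 1`, so the condition `a ∧ x = 0` on `x ∈ ⋀ᵈ V` can
be read off from the action of `t` on `⋀ᵈ V` alone. On the other hand, `d + 1` vectors are linearly
independent if and only if `⋀ᵈ V ≠ 0` and they have no common nonzero annihilator in `⋀ᵈ V`: if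
dependent, they lie in a subspace of dimension `d`, and the wedge of a basis of it is such an
annihilator. Hence linear independence of `d + 1` reflection vectors is visible on `⋀ᵈ V`. -/

section DivisionRing

variable {K V : Type*} [DivisionRing K] [AddCommGroup V] [Module K V]

lemma exists_linearIndependent_range_subset_of_le_rank {m n : ℕ} {v : Fin m → V}
    (hv : LinearIndependent K v) (hmn : m ≤ n) (hn : n ≤ Module.rank K V) :
    ∃ u : Fin n → V, LinearIndependent K u ∧ Set.range v ⊆ Set.range u := by
  induction n, hmn using Nat.le_induction with
  | base => exact ⟨v, hv, subset_rfl⟩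
  | succ n _ ih =>
    have hlt : (n : Cardinal) < Module.rank K V :=
      lt_of_lt_of_le (by exact_mod_cast n.lt_succ_self) hn
    obtain ⟨u, hu, hvu⟩ := ih hlt.le
    obtain ⟨w, hw⟩ := exists_linearIndependent_cons_of_lt_rank hu hlt
    exact ⟨_, hw, hvu.trans (by rw [Fin.range_cons]; exact Set.subset_insert _ _)⟩

lemma exists_linearIndependent_le_span_of_le_rank {U : Submodule K V} [FiniteDimensional K U]
    {n : ℕ} (hU : finrank K U ≤ n) (hn : n ≤ Module.rank K V) :
    ∃ u : Fin n → V, LinearIndependent K u ∧ U ≤ Submodule.span K (Set.range u) := by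
  let b := Module.finBasis K U
  obtain ⟨u, hu, hbu⟩ := exists_linearIndependent_range_subset_of_le_rank
    (b.linearIndependent.map' U.subtype U.ker_subtype) hU hn
  refine ⟨u, hu, ?_⟩
  calc U = (Submodule.span K (Set.range b)).map U.subtype := by rw [b.span_eq, U.map_subtype_top]
    _ = Submodule.span K (Set.range (U.subtype ∘ b)) := by rw [Submodule.map_span, Set.range_comp]
    _ ≤ Submodule.span K (Set.range u) := Submodule.span_mono hbu

end DivisionRing

section CommRing

variable {R M : Type*} [CommRing R] [AddCommGroup M] [Module R M]

lemma ι_mul_ιMulti (v : M) {n : ℕ} (u : Fin n → M) :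
    ι R v * ιMulti R n u = ιMulti R (n + 1) (Fin.cons v u : Fin (n + 1) → M) := by
  rw [ιMulti_succ_apply]
  rfl

lemma contractLeft_eq_zero_of_mem_exteriorPower_zero (f : Dual R M) {x : ExteriorAlgebra R M}
    (hx : x ∈ ⋀[R]^0 M) : CliffordAlgebra.contractLeft f x = 0 := by
  rw [exteriorPower, pow_zero] at hx
  obtain ⟨r, rfl⟩ := Submodule.mem_one.mp hx
  exact CliffordAlgebra.contractLeft_algebraMap 0 f r

lemma contractLeft_mem_exteriorPower (f : Dual R M) {n : ℕ} {x : ExteriorAlgebra R M}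
    (hx : x ∈ ⋀[R]^(n + 1) M) : CliffordAlgebra.contractLeft f x ∈ ⋀[R]^n M := by
  induction n generalizing x with
  | zero =>
    rw [exteriorPower, zero_add, pow_one] at hx
    obtain ⟨v, rfl⟩ := hx
    rw [CliffordAlgebra.contractLeft_ι, exteriorPower, pow_zero]
    exact Submodule.algebraMap_mem (f v)
  | succ n ih =>
    rw [exteriorPower, pow_succ'] at hx
    induction hx using Submodule.mul_induction_on' with
    | mem_mul_mem v hv y hy =>
      obtain ⟨v, rfl⟩ := hv
      rw [CliffordAlgebra.contractLeft_ι_mul]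
      refine sub_mem (Submodule.smul_mem _ _ hy) ?_
      rw [exteriorPower, pow_succ']
      exact Submodule.mul_mem_mul (LinearMap.mem_range_self _ v) (ih hy)
    | add x _ y _ hx hy => rw [map_add]; exact add_mem hx hy

lemma ι_mul_contractLeft_of_ι_mul_eq_zero {v : M} {x : ExteriorAlgebra R M} (hx : ι R v * x = 0)
    (f : Dual R M) : ι R v * CliffordAlgebra.contractLeft f x = f v • x := by
  have h := CliffordAlgebra.contractLeft_ι_mul (Q := 0) f v x
  rw [hx, map_zero] at h
  exact (sub_eq_zero.mp h.symm).symm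

-- Mathlib's `LinearMap.transvection f a` does not assume `f a = 0`, so it includes reflections.
lemma exteriorAlgebra_map_transvection_apply (f : Dual R M) (a : M) (x : ExteriorAlgebra R M) :
    ExteriorAlgebra.map (LinearMap.transvection f a) x =
      x + ι R a * CliffordAlgebra.contractLeft f x := by
  induction x using CliffordAlgebra.left_induction with
  | algebraMap r =>
    rw [CliffordAlgebra.contractLeft_algebraMap, mul_zero, add_zero, AlgHom.commutes]
  | add x y hx hy => simp only [map_add, hx, hy, mul_add]; abel
  | ι_mul x v hx =>
    have hva : ι R v * ι R a = -(ι R a * ι R v) := eq_neg_of_add_eq_zero_left (ι_add_mul_swap v a)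
    have haa (y : ExteriorAlgebra R M) : ι R a * (ι R a * y) = 0 := by
      rw [← mul_assoc, ι_sq_zero, zero_mul]
    have hvay (y : ExteriorAlgebra R M) : ι R v * (ι R a * y) = -(ι R a * (ι R v * y)) := by
      rw [← mul_assoc, hva, neg_mul, mul_assoc]
    rw [map_mul, map_apply_ι, hx, CliffordAlgebra.contractLeft_ι_mul, LinearMap.transvection.apply]
    simp only [map_add, map_smul, add_mul, mul_add, mul_sub, smul_mul_assoc, mul_smul_comm, haa,
      hvay, smul_zero]
    abel

end CommRing

section Field

variable {F V : Type*} [Field F] [AddCommGroup V] [Module F V]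

lemma ι_mul_eq_zero_iff_exists_map_transvection_eq_smul {f : Dual F V} {a : V} (hfa : f a ≠ 0)
    {x : ExteriorAlgebra F V} :
    ι F a * x = 0 ↔
      ∃ μ : F, μ ≠ 1 ∧ ExteriorAlgebra.map (LinearMap.transvection f a) x = μ • x := by
  simp only [exteriorAlgebra_map_transvection_apply]
  constructor
  · intro hx
    refine ⟨1 + f a, by simpa using hfa, ?_⟩
    rw [ι_mul_contractLeft_of_ι_mul_eq_zero hx, add_smul, one_smul]
  · rintro ⟨μ, hμ, hx⟩
    have hsmul : ι F a * CliffordAlgebra.contractLeft f x = (μ - 1) • x := by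
      rw [sub_smul, one_smul, ← hx, add_sub_cancel_left]
    have hzero : (μ - 1) • (ι F a * x) = 0 := by
      rw [← mul_smul_comm, ← hsmul, ← mul_assoc, ι_sq_zero, zero_mul]
    exact (smul_eq_zero.mp hzero).resolve_left (sub_ne_zero.mpr hμ)

lemma eq_zero_of_forall_ι_mul_eq_zero {n : ℕ} {a : Fin (n + 1) → V} (ha : LinearIndependent F a)
    {x : ExteriorAlgebra F V} (hx : x ∈ ⋀[F]^n V) (hax : ∀ i, ι F (a i) * x = 0) : x = 0 := by
  obtain ⟨htail, hhead⟩ := linearIndependent_finSucc.mp ha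
  obtain ⟨f, hf_head, hf_tail⟩ := Submodule.exists_le_ker_of_notMem hhead
  have hcontract : CliffordAlgebra.contractLeft f x = 0 := by
    cases n with
    | zero => exact contractLeft_eq_zero_of_mem_exteriorPower_zero f hx
    | succ n =>
      refine eq_zero_of_forall_ι_mul_eq_zero htail (contractLeft_mem_exteriorPower f hx) fun i => ?_
      have hfi : f (a i.succ) = 0 := hf_tail (Submodule.subset_span ⟨i, rfl⟩)
      rw [Fin.tail, ι_mul_contractLeft_of_ι_mul_eq_zero (hax i.succ), hfi, zero_smul]
  have hsmul := ι_mul_contractLeft_of_ι_mul_eq_zero (hax 0) f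
  rw [hcontract, mul_zero] at hsmul
  exact (smul_eq_zero.mp hsmul.symm).resolve_left hf_head

lemma ι_mul_ιMulti_eq_zero_of_mem_span {n : ℕ} {u : Fin n → V} {v : V}
    (hv : v ∈ Submodule.span F (Set.range u)) : ι F v * ιMulti F n u = 0 := by
  rw [ι_mul_ιMulti]
  exact (ιMulti F (n + 1)).map_linearDependent _ fun h => (linearIndependent_finCons.mp h).2 hv

lemma ιMulti_ne_zero_iff_linearIndependent {n : ℕ} {u : Fin n → V} :
    ιMulti F n u ≠ 0 ↔ LinearIndependent F u := by
  refine ⟨fun h => not_imp_comm.mp ((ιMulti F n).map_linearDependent u) h, fun hu => ?_⟩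
  induction n with
  | zero => rw [ιMulti_zero_apply]; exact one_ne_zero
  | succ n ih =>
    intro h0
    refine ih (linearIndependent_finSucc.mp hu).1 ?_
    refine eq_zero_of_forall_ι_mul_eq_zero hu (ιMulti_range F n (Set.mem_range_self _)) ?_
    refine Fin.cases ?_ fun i => ?_
    · rw [ι_mul_ιMulti, Fin.cons_self_tail, h0]
    · exact ι_mul_ιMulti_eq_zero_of_mem_span (Submodule.subset_span ⟨i, rfl⟩)

lemma nontrivial_exteriorPower_iff_le_rank {n : ℕ} :
    Nontrivial (⋀[F]^n V) ↔ (n : Cardinal) ≤ Module.rank F V := by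
  rw [Submodule.nontrivial_iff_ne_bot]
  constructor
  · intro h
    obtain ⟨u, hu⟩ : ∃ u : Fin n → V, ιMulti F n u ≠ 0 := by
      contrapose! h
      rw [← ιMulti_span_fixedDegree, Submodule.span_eq_bot]
      rintro _ ⟨u, rfl⟩
      exact h u
    simpa using (ιMulti_ne_zero_iff_linearIndependent.mp hu).cardinal_lift_le_rank
  · intro h
    obtain ⟨u, hu, -⟩ := exists_linearIndependent_range_subset_of_le_rank
      (linearIndependent_empty_type (v := (Fin.elim0 : Fin 0 → V))) n.zero_le h
    exact (Submodule.ne_bot_iff _).mpr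
      ⟨_, (wedge n u).2, ιMulti_ne_zero_iff_linearIndependent.mpr hu⟩

theorem linearIndependent_iff_nontrivial_and_forall_ι_mul_eq_zero {n : ℕ} {a : Fin (n + 1) → V} :
    LinearIndependent F a ↔ Nontrivial (⋀[F]^n V) ∧
      ∀ x : ⋀[F]^n V, (∀ i, ι F (a i) * (x : ExteriorAlgebra F V) = 0) → x = 0 := by
  rw [nontrivial_exteriorPower_iff_le_rank]
  constructor
  · intro ha
    have hrank : ((n + 1 : ℕ) : Cardinal) ≤ Module.rank F V := by
      simpa using ha.cardinal_lift_le_rank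
    refine ⟨le_trans (by exact_mod_cast n.le_succ) hrank, fun x hx => ?_⟩
    exact Subtype.ext (eq_zero_of_forall_ι_mul_eq_zero ha x.2 hx)
  · rintro ⟨hrank, hannihilator⟩
    by_contra ha
    have hspan : finrank F (Submodule.span F (Set.range a)) ≤ n := by
      rwa [linearIndependent_iff_card_le_finrank_span, Fintype.card_fin, not_le, Nat.lt_succ_iff]
        at ha
    have := FiniteDimensional.span_of_finite F (Set.finite_range a)
    obtain ⟨u, hu, hau⟩ := exists_linearIndependent_le_span_of_le_rank hspan hrank
    have hwedge : wedge n u = 0 := hannihilator _ fun i =>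
      ι_mul_ιMulti_eq_zero_of_mem_span (hau (Submodule.subset_span ⟨i, rfl⟩))
    exact ιMulti_ne_zero_iff_linearIndependent.mpr hu (congrArg Subtype.val hwedge)

end Field

section Reflection

variable {F V : Type*} [Field F] [AddCommGroup V] [Module F V] {t : End F V} {a : V}

lemma IsReflVector.exists_eq_transvection (ha : IsReflVector t a)
    (ht : finrank F (LinearMap.range (t - 1)) = 1) :
    ∃ f : Dual F V, t = LinearMap.transvection f a := by
  have hrange : ∀ v, (t - 1) v ∈ Submodule.span F {a} := fun v => by
    obtain ⟨c, hc⟩ := (finrank_eq_one_iff_of_nonzero' (⟨a, ha.2⟩ : LinearMap.range (t - 1))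
      (by simpa [Subtype.ext_iff] using ha.1)).mp ht ⟨(t - 1) v, LinearMap.mem_range_self _ v⟩
    exact Submodule.mem_span_singleton.mpr ⟨c, congrArg Subtype.val hc⟩
  let coord := (LinearEquiv.toSpanNonzeroSingleton F V a ha.1).symm
  refine ⟨coord.toLinearMap ∘ₗ (t - 1).codRestrict _ hrange, LinearMap.ext fun v => ?_⟩
  have hcoord : coord ((t - 1).codRestrict _ hrange v) • a = (t - 1) v :=
    LinearEquiv.toSpanNonzeroSingleton_symm_apply_smul F V a ha.1 _
  rw [LinearMap.transvection.apply, LinearMap.comp_apply, LinearEquiv.coe_coe, hcoord]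
  simp

lemma IsDiagonalizable.eq_one_of_sub_one_sq_eq_zero (ht : IsDiagonalizable t)
    (hsq : (t - 1) ^ 2 = 0) : t = 1 := by
  rw [← sub_eq_zero, ← LinearMap.ker_eq_top, eq_top_iff, ← ht, iSup_le_iff]
  intro μ v hv
  have hμ : (t - 1) v = (μ - 1) • v := by
    rw [LinearMap.sub_apply, End.mem_eigenspace_iff.mp hv, sub_smul, one_smul, End.one_apply]
  have hμsq : (μ - 1) • (μ - 1) • v = 0 := by
    rw [← hμ, ← map_smul, ← hμ, ← Module.End.mul_apply, ← sq, hsq, LinearMap.zero_apply]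
  rw [LinearMap.mem_ker, hμ]
  simpa using hμsq

lemma IsGenReflection.exists_eq_transvection (ht : IsGenReflection t) (ha : IsReflVector t a) :
    ∃ f : Dual F V, f a ≠ 0 ∧ t = LinearMap.transvection f a := by
  obtain ⟨f, rfl⟩ := ha.exists_eq_transvection ht.2
  refine ⟨f, fun hfa => ?_, rfl⟩
  have hone : LinearMap.transvection f a = 1 :=
    ht.1.eq_one_of_sub_one_sq_eq_zero (by ext v; simp [sq, LinearMap.transvection.apply, hfa])
  obtain ⟨v, hv⟩ := ha.2
  exact ha.1 (by rw [← hv, hone, sub_self, LinearMap.zero_apply])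

theorem IsGenReflection.ι_mul_eq_zero_iff_exists_extMap_eq_smul (ht : IsGenReflection t)
    (ha : IsReflVector t a) {d : ℕ} {x : ⋀[F]^d V} :
    ι F a * (x : ExteriorAlgebra F V) = 0 ↔ ∃ μ : F, μ ≠ 1 ∧ extMap d t x = μ • x := by
  obtain ⟨f, hfa, rfl⟩ := ht.exists_eq_transvection ha
  rw [ι_mul_eq_zero_iff_exists_map_transvection_eq_smul hfa]
  simp only [Subtype.ext_iff]
  rfl

end Reflection

theorem stmt_18_general {F V₁ V₂ : Type*} [Field F] [AddCommGroup V₁] [Module F V₁]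
    [AddCommGroup V₂] [Module F V₂] {d : ℕ}
    {t₁ : Fin (d + 1) → End F V₁} {t₂ : Fin (d + 1) → End F V₂}
    {a : Fin (d + 1) → V₁} {b : Fin (d + 1) → V₂}
    (ht₁ : ∀ l, IsGenReflection (t₁ l) ∧ IsReflVector (t₁ l) (a l))
    (ht₂ : ∀ l, IsGenReflection (t₂ l) ∧ IsReflVector (t₂ l) (b l))
    (e : ⋀[F]^d V₁ ≃ₗ[F] ⋀[F]^d V₂)
    (he : ∀ l x, e (extMap d (t₁ l) x) = extMap d (t₂ l) (e x)) :
    LinearIndependent F a ↔ LinearIndependent F b := by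
  have hannihilator (l : Fin (d + 1)) (x : ⋀[F]^d V₁) :
      ι F (a l) * (x : ExteriorAlgebra F V₁) = 0 ↔
        ι F (b l) * (e x : ExteriorAlgebra F V₂) = 0 := by
    rw [(ht₁ l).1.ι_mul_eq_zero_iff_exists_extMap_eq_smul (ht₁ l).2,
      (ht₂ l).1.ι_mul_eq_zero_iff_exists_extMap_eq_smul (ht₂ l).2]
    simp only [← he, ← map_smul, e.injective.eq_iff]
  rw [linearIndependent_iff_nontrivial_and_forall_ι_mul_eq_zero,
    linearIndependent_iff_nontrivial_and_forall_ι_mul_eq_zero]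
  refine and_congr e.toEquiv.nontrivial_congr (e.toEquiv.forall_congr fun x => ?_)
  simp only [hannihilator, LinearEquiv.coe_toEquiv, e.map_eq_zero_iff]

/-- Under an isomorphism `⋀^d V₁ ≅ ⋀^d V₂` (`2 ≤ d ≤ dim V₁ - 1 = dim V₂ - 1`), linear
independence of `d+1` reflection vectors in `V₁` implies that of the corresponding ones
in `V₂`. -/
theorem stmt_18 {F V₁ V₂ W : Type*} [Field F] [CharZero F]
    [AddCommGroup V₁] [Module F V₁] [FiniteDimensional F V₁] [Nontrivial V₁]
    [AddCommGroup V₂] [Module F V₂] [FiniteDimensional F V₂] [Nontrivial V₂] [Group W]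
    (k : ℕ) (s : Fin k → W) (hgen : Subgroup.closure (Set.range s) = ⊤)
    (ρ₁ : Representation F W V₁) (ρ₂ : Representation F W V₂)
    (hirr₁ : ∀ U : Submodule F V₁, (∀ w : W, ∀ v ∈ U, ρ₁ w v ∈ U) → U = ⊥ ∨ U = ⊤)
    (hirr₂ : ∀ U : Submodule F V₂, (∀ w : W, ∀ v ∈ U, ρ₂ w v ∈ U) → U = ⊥ ∨ U = ⊤)
    (α : Fin k → V₁) (β : Fin k → V₂)
    (hrefl₁ : ∀ i, IsGenReflection (ρ₁ (s i)) ∧ IsReflVector (ρ₁ (s i)) (α i))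
    (hrefl₂ : ∀ i, IsGenReflection (ρ₂ (s i)) ∧ IsReflVector (ρ₂ (s i)) (β i))
    (d : ℕ) (hd2 : 2 ≤ d) (hd : d ≤ Module.finrank F V₁ - 1)
    (hdim : Module.finrank F V₁ - 1 = Module.finrank F V₂ - 1)
    (e : ↥(⋀[F]^d V₁) ≃ₗ[F] ↥(⋀[F]^d V₂))
    (he : ∀ (w : W) (x : ↥(⋀[F]^d V₁)), e (extMap d (ρ₁ w) x) = extMap d (ρ₂ w) (e x))
    (j : Fin (d + 1) → Fin k)
    (hind : LinearIndependent F (fun l => α (j l))) :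
    LinearIndependent F (fun l => β (j l)) := by
  exact (stmt_18_general (fun l => hrefl₁ (j l)) (fun l => hrefl₂ (j l)) e
    (fun l => he (s (j l)))).mp hind
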